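/- arXiv:2106.13378 — 2 statements merged into one kernel-verified Lean document; each statement's English description precedes it below -/
import Mathlib

section
/- Let w \in S_n with code c = (c_1,...,c_n). Then w avoids the four patterns 3142, 3214, 2431 and 3241 (equivalently, w^{-1} is evil-avoiding) if and only if the following condition holds: for every descent position j of w (i.e. w_j > w_{j+1}), if there exists b \leq j such that w_b < w_{b+1} < ... < w_j and 0 < c_b < n - j, then, taking b maximal with these properties, one has c_{j+1} = c_{j+2} = ... = c_{j+c_b} = 0. -/
/-! Call a position small or big according as its value is below or above a fixed value `w_b`.
If `b, …, j` is an increasing run, then `c_b` counts exactly the small positions after `j`, and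
`c_b < n - j` says that some position after `j` is big.

*Avoidance implies the code condition* (`code_eq_zero_of_avoids`; the maximality of `b` plays no
role). If `j + 1` is big, then `b, j, j + 1` and any later small position form `2431`. Hence
`j + 1` is small. Avoiding `3142` and `3241` forbids small–big–small after `b`, so the small
positions are precisely `j + 1, …, j + c_b`; avoiding `3214` and `3241` then leaves no inversion
that starts at one of them.

*The code condition implies avoidance* (`false_of_codeCond`). Each of the four patterns, with first
letter at position `i`, supplies an inversion `s < s'` with `w_{s'} < w_i` and a position `u` with
`w_i < w_u`, where `s` and `u` lie beyond the end `j` of the increasing run starting at `i`. So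
`i` is a candidate for `b`, and the maximal candidate `b` satisfies `i ≤ b`, `w_i ≤ w_b`. The
condition forces the positions small for `w_b` to be exactly `j + 1, …, j + c_b`
(`le_of_small`). Since `s'` is small, `s < s'` is among these positions too, and `c_s = 0`
contradicts the inversion. -/

open scoped BigOperators

/-- Value of the permutation word at 1-indexed position `i` (values 1-indexed too);
`0` outside the range `[1, n]`. -/
def pW (n : ℕ) (w : Equiv.Perm (Fin n)) (i : ℕ) : ℕ :=
  if h : 1 ≤ i ∧ i ≤ n then ((w ⟨i - 1, by omega⟩ : ℕ) + 1) else 0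

/-- 1-indexed position of the (1-indexed) value `v` in the word of `w`. -/
def posOf (n : ℕ) (w : Equiv.Perm (Fin n)) (v : ℕ) : ℕ := pW n w⁻¹ v

/-- `w` contains the pattern `p` (given by its 0-indexed value sequence). -/
def ContainsPattern {n k : ℕ} (w : Equiv.Perm (Fin n)) (p : Fin k → Fin k) : Prop :=
  ∃ f : Fin k ↪o Fin n, ∀ a b : Fin k, p a < p b ↔ w (f a) < w (f b)

def AvoidsPattern {n k : ℕ} (w : Equiv.Perm (Fin n)) (p : Fin k → Fin k) : Prop :=
  ¬ ContainsPattern w p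

/-- A permutation is evil-avoiding if it avoids 2413, 4132, 4213 and 3214. -/
def EvilAvoiding {n : ℕ} (w : Equiv.Perm (Fin n)) : Prop :=
  AvoidsPattern w ![1, 3, 0, 2] ∧ AvoidsPattern w ![3, 0, 2, 1] ∧
    AvoidsPattern w ![3, 1, 0, 2] ∧ AvoidsPattern w ![2, 1, 0, 3]

/-- The (Lehmer) code of `w` at 1-indexed position `i`. -/
def code1 (n : ℕ) (w : Equiv.Perm (Fin n)) (i : ℕ) : ℕ :=
  ((Finset.Icc 1 n).filter (fun j => i < j ∧ pW n w j < pW n w i)).card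

/-- The number of descents of (the word of) `w`. -/
def descNum (n : ℕ) (w : Equiv.Perm (Fin n)) : ℕ :=
  ((Finset.Icc 1 (n - 1)).filter (fun i => pW n w (i + 1) < pW n w i)).card

/-- `St(n,k)`: permutations starting with 1, evil-avoiding, whose inverse has exactly `k`
descents (equivalently, with exactly `k` recoils). -/
def StSet (n k : ℕ) : Set (Equiv.Perm (Fin n)) :=
  {w | pW n w 1 = 1 ∧ EvilAvoiding w ∧ descNum n w⁻¹ = k}

/-! ### Patterns in terms of 1-indexed positions -/

lemma pW_inj {n : ℕ} (w : Equiv.Perm (Fin n)) {a b : ℕ} (ha : 1 ≤ a) (ha' : a ≤ n)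
    (hb : 1 ≤ b) (hb' : b ≤ n) (h : pW n w a = pW n w b) : a = b := by
  unfold pW at h
  rw [dif_pos ⟨ha, ha'⟩, dif_pos ⟨hb, hb'⟩] at h
  have h1 : w ⟨a - 1, by omega⟩ = w ⟨b - 1, by omega⟩ := Fin.ext (by omega)
  have h2 := congrArg Fin.val (w.injective h1)
  simp only at h2
  omega

lemma pW_succ {n : ℕ} (w : Equiv.Perm (Fin n)) (i : Fin n) :
    pW n w (i + 1) = (w i : ℕ) + 1 := by
  unfold pW
  rw [dif_pos ⟨by omega, by omega⟩]
  simp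

/-- Containment of a length-four pattern, expressed through 1-indexed positions. -/
lemma containsPattern_four {n : ℕ} (w : Equiv.Perm (Fin n)) (p : Fin 4 → Fin 4) :
    ContainsPattern w p ↔ ∃ a b c d : ℕ, 1 ≤ a ∧ a < b ∧ b < c ∧ c < d ∧ d ≤ n ∧
      ∀ x y : Fin 4, p x < p y ↔ pW n w (![a, b, c, d] x) < pW n w (![a, b, c, d] y) := by
  constructor
  · rintro ⟨f, hf⟩
    have h01 : f 0 < f 1 := f.strictMono (by decide)
    have h12 : f 1 < f 2 := f.strictMono (by decide)
    have h23 : f 2 < f 3 := f.strictMono (by decide)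
    refine ⟨f 0 + 1, f 1 + 1, f 2 + 1, f 3 + 1, by omega, by omega, by omega, by omega,
      by omega, ?_⟩
    have key : ∀ x : Fin 4, pW n w
        (![(f 0 : ℕ) + 1, (f 1 : ℕ) + 1, (f 2 : ℕ) + 1, (f 3 : ℕ) + 1] x)
          = (w (f x) : ℕ) + 1 := by
      intro x
      fin_cases x <;> exact pW_succ w _
    intro x y
    rw [key, key, hf]
    omega
  · rintro ⟨a, b, c, d, h1, hab, hbc, hcd, hd, h⟩
    let g : Fin 4 → Fin n := ![⟨a - 1, by omega⟩, ⟨b - 1, by omega⟩, ⟨c - 1, by omega⟩,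
      ⟨d - 1, by omega⟩]
    have hg : StrictMono g := by
      rw [Fin.strictMono_iff_lt_succ]
      intro i
      fin_cases i <;> simp [g] <;> omega
    have key : ∀ x : Fin 4, pW n w (![a, b, c, d] x) = (w (g x) : ℕ) + 1 := by
      intro x
      have hx : ![a, b, c, d] x = g x + 1 := by
        fin_cases x <;> simp [g] <;> omega
      rw [hx, pW_succ]
    refine ⟨OrderEmbedding.ofStrictMono g hg, fun x y => ?_⟩
    rw [h, key, key]
    simp only [OrderEmbedding.coe_ofStrictMono]
    omega

lemma contains_3142 {n : ℕ} (w : Equiv.Perm (Fin n)) :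
    ContainsPattern w ![2, 0, 3, 1] ↔ ∃ a b c d : ℕ, 1 ≤ a ∧ a < b ∧ b < c ∧ c < d ∧ d ≤ n ∧
      pW n w b < pW n w d ∧ pW n w d < pW n w a ∧ pW n w a < pW n w c := by
  rw [containsPattern_four]
  refine exists_congr fun a => exists_congr fun b => exists_congr fun c => exists_congr fun d => ?_
  simp only [Fin.forall_fin_succ, Fin.forall_fin_zero, Matrix.cons_val_zero,
    Matrix.cons_val_succ]
  simp
  omega

lemma contains_3214 {n : ℕ} (w : Equiv.Perm (Fin n)) :
    ContainsPattern w ![2, 1, 0, 3] ↔ ∃ a b c d : ℕ, 1 ≤ a ∧ a < b ∧ b < c ∧ c < d ∧ d ≤ n ∧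
      pW n w c < pW n w b ∧ pW n w b < pW n w a ∧ pW n w a < pW n w d := by
  rw [containsPattern_four]
  refine exists_congr fun a => exists_congr fun b => exists_congr fun c => exists_congr fun d => ?_
  simp only [Fin.forall_fin_succ, Fin.forall_fin_zero, Matrix.cons_val_zero,
    Matrix.cons_val_succ]
  simp
  omega

lemma contains_2431 {n : ℕ} (w : Equiv.Perm (Fin n)) :
    ContainsPattern w ![1, 3, 2, 0] ↔ ∃ a b c d : ℕ, 1 ≤ a ∧ a < b ∧ b < c ∧ c < d ∧ d ≤ n ∧
      pW n w d < pW n w a ∧ pW n w a < pW n w c ∧ pW n w c < pW n w b := by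
  rw [containsPattern_four]
  refine exists_congr fun a => exists_congr fun b => exists_congr fun c => exists_congr fun d => ?_
  simp only [Fin.forall_fin_succ, Fin.forall_fin_zero, Matrix.cons_val_zero,
    Matrix.cons_val_succ]
  simp
  omega

lemma contains_3241 {n : ℕ} (w : Equiv.Perm (Fin n)) :
    ContainsPattern w ![2, 1, 3, 0] ↔ ∃ a b c d : ℕ, 1 ≤ a ∧ a < b ∧ b < c ∧ c < d ∧ d ≤ n ∧
      pW n w d < pW n w b ∧ pW n w b < pW n w a ∧ pW n w a < pW n w c := by
  rw [containsPattern_four]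
  refine exists_congr fun a => exists_congr fun b => exists_congr fun c => exists_congr fun d => ?_
  simp only [Fin.forall_fin_succ, Fin.forall_fin_zero, Matrix.cons_val_zero,
    Matrix.cons_val_succ]
  simp
  omega

/-! ### Increasing runs and the code -/

lemma le_of_run {f : ℕ → ℕ} {b j : ℕ} (hrun : ∀ m, b ≤ m → m < j → f m < f (m + 1)) :
    ∀ m, b ≤ m → m ≤ j → f b ≤ f m := by
  intro m hm
  induction m, hm using Nat.le_induction with
  | base => intro _; exact le_rfl
  | succ m hm ih =>
    intro h
    have := hrun m hm (by omega)
    have := ih (by omega)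
    omega

/-- Before the lower end of an inversion starting at or after `i`, the increasing run of `i`
has ended. -/
lemma exists_run_end {f : ℕ → ℕ} {i p q : ℕ} (hip : i ≤ p) (hpq : p < q) (hf : f q < f p) :
    ∃ j, i ≤ j ∧ j < q ∧ (∀ m, i ≤ m → m < j → f m < f (m + 1)) ∧ f (j + 1) ≤ f j := by
  classical
  have hex : ∃ j, i ≤ j ∧ f (j + 1) ≤ f j := by
    by_contra! hcon
    have := le_of_run (f := f) (b := p) (j := q) (fun m hm _ => hcon m (by omega)) q hpq.le le_rfl
    omega
  obtain ⟨h1, h2⟩ := Nat.find_spec hex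
  have hmin : ∀ m, i ≤ m → m < Nat.find hex → f m < f (m + 1) := by
    intro m hm hlt
    have := Nat.find_min hex hlt
    by_contra hcon
    exact this ⟨hm, by omega⟩
  refine ⟨Nat.find hex, h1, ?_, hmin, h2⟩
  by_contra! hcon
  have := le_of_run (f := f) (b := p) (j := q)
    (fun m hm hlt => hmin m (by omega) (by omega)) q hpq.le le_rfl
  omega

/-- Nothing inside an increasing run lies below its first value, so the code at its start only
counts positions after its end. -/
lemma code1_of_run {n : ℕ} (w : Equiv.Perm (Fin n)) {b j : ℕ} (hbj : b ≤ j)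
    (hrun : ∀ m, b ≤ m → m < j → pW n w m < pW n w (m + 1)) :
    code1 n w b = ((Finset.Ioc j n).filter (fun s => pW n w s < pW n w b)).card := by
  unfold code1
  congr 1
  ext s
  simp only [Finset.mem_filter, Finset.mem_Icc, Finset.mem_Ioc]
  constructor
  · rintro ⟨⟨h1, h2⟩, h3, h4⟩
    refine ⟨⟨?_, h2⟩, h4⟩
    by_contra! hcon
    have := le_of_run hrun s h3.le hcon
    omega
  · rintro ⟨⟨h1, h2⟩, h3⟩
    exact ⟨⟨by omega, h2⟩, by omega, h3⟩

lemma code1_pos_of_inv {n : ℕ} (w : Equiv.Perm (Fin n)) {s s' : ℕ} (h : s < s') (h' : s' ≤ n)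
    (hf : pW n w s' < pW n w s) : 0 < code1 n w s :=
  Finset.card_pos.2 ⟨s', by simp only [Finset.mem_filter, Finset.mem_Icc]; omega⟩

lemma exists_inv_of_code1_pos {n : ℕ} (w : Equiv.Perm (Fin n)) {s : ℕ} (h : 0 < code1 n w s) :
    ∃ s', s < s' ∧ s' ≤ n ∧ pW n w s' < pW n w s := by
  obtain ⟨s', hs'⟩ := Finset.card_pos.1 h
  simp only [Finset.mem_filter, Finset.mem_Icc] at hs'
  exact ⟨s', hs'.2.1, hs'.1.2, hs'.2.2⟩

/-- Fewer than `c_b` positions lie strictly between `j` and `t`, so they cannot contain all `c_b`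
small ones. -/
lemma exists_small_ge {n : ℕ} (w : Equiv.Perm (Fin n)) {b j t : ℕ} (hbj : b ≤ j)
    (hrun : ∀ m, b ≤ m → m < j → pW n w m < pW n w (m + 1))
    (ht : j + 1 ≤ t) (ht' : t ≤ j + code1 n w b) :
    ∃ y, t ≤ y ∧ y ≤ n ∧ pW n w y < pW n w b := by
  by_contra! hcon
  have hsub : (Finset.Ioc j n).filter (fun s => pW n w s < pW n w b) ⊆ Finset.Ioo j t := by
    intro s hs
    simp only [Finset.mem_filter, Finset.mem_Ioc] at hs
    rw [Finset.mem_Ioo]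
    refine ⟨hs.1.1, ?_⟩
    by_contra! h
    have := hcon s h hs.1.2
    omega
  have := Finset.card_le_card hsub
  rw [← code1_of_run w hbj hrun, Nat.card_Ioo] at this
  omega

/-! ### Avoidance implies the code condition -/

/-- The pattern-avoidance hypotheses make every candidate `b`, maximal or not, satisfy the code
condition. -/
lemma code_eq_zero_of_avoids {n : ℕ} (w : Equiv.Perm (Fin n))
    (A1 : AvoidsPattern w ![2, 0, 3, 1]) (A2 : AvoidsPattern w ![2, 1, 0, 3])
    (A3 : AvoidsPattern w ![1, 3, 2, 0]) (A4 : AvoidsPattern w ![2, 1, 3, 0])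
    {j b t : ℕ} (hjn : j + 1 ≤ n) (hdesc : pW n w (j + 1) < pW n w j)
    (hb : 1 ≤ b) (hbj : b ≤ j)
    (hrun : ∀ m, b ≤ m → m < j → pW n w m < pW n w (m + 1))
    (hpos : 0 < code1 n w b) (hlt : code1 n w b < n - j)
    (ht : j + 1 ≤ t) (ht' : t ≤ j + code1 n w b) : code1 n w t = 0 := by
  by_contra hne
  obtain ⟨s', hts', hs'n, hs'⟩ := exists_inv_of_code1_pos w (Nat.pos_of_ne_zero hne)
  -- small–big–small after `b` is `3142` or `3241`, according to the order of the small values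
  have sbs : ∀ x y z, b < x → x < y → y < z → z ≤ n → pW n w x < pW n w b →
      pW n w b < pW n w y → pW n w z < pW n w b → False := by
    intro x y z h1 h2 h3 h4 h5 h6 h7
    rcases lt_trichotomy (pW n w x) (pW n w z) with h | h | h
    · exact A1 ((contains_3142 w).2 ⟨b, x, y, z, hb, h1, h2, h3, h4, h, h7, h6⟩)
    · have := pW_inj w (by omega) (by omega) (by omega) (by omega) h
      omega
    · exact A4 ((contains_3241 w).2 ⟨b, x, y, z, hb, h1, h2, h3, h4, h, h5, h6⟩)
  have ne_b : ∀ x, j < x → x ≤ n → pW n w x ≠ pW n w b := by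
    intro x h1 h2 h
    have := pW_inj w (by omega) (by omega) (by omega) (by omega) h
    omega
  -- `c_b < n - j` leaves room for a big position `x` after `j`
  obtain ⟨x, hjx, hxn, hx⟩ : ∃ x, j < x ∧ x ≤ n ∧ pW n w b < pW n w x := by
    by_contra! hcon
    have hall : (Finset.Ioc j n).filter (fun s => pW n w s < pW n w b) = Finset.Ioc j n := by
      rw [Finset.filter_eq_self]
      intro s hs
      rw [Finset.mem_Ioc] at hs
      exact lt_of_le_of_ne (hcon s hs.1 hs.2) (ne_b s hs.1 hs.2)
    rw [code1_of_run w hbj hrun, hall, Nat.card_Ioc] at hlt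
    omega
  have hj1 : pW n w (j + 1) < pW n w b := by
    by_contra! hcon
    have hgt := lt_of_le_of_ne hcon (ne_b (j + 1) (by omega) hjn).symm
    obtain ⟨r, hr1, hr2, hr3⟩ := exists_small_ge w (t := j + 1) hbj hrun le_rfl (by omega)
    have hbj' : b ≠ j := by rintro rfl; omega
    have hr4 : r ≠ j + 1 := by rintro rfl; omega
    exact A3 ((contains_2431 w).2
      ⟨b, j, j + 1, r, hb, by omega, by omega, by omega, hr2, hr3, hgt, hdesc⟩)
  have htb : pW n w t < pW n w b := by
    by_contra! hcon
    have hgt := lt_of_le_of_ne hcon (ne_b t (by omega) (by omega)).symm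
    obtain ⟨y, hy1, hy2, hy3⟩ := exists_small_ge w hbj hrun ht ht'
    have hty : y ≠ t := by rintro rfl; omega
    have htj : t ≠ j + 1 := by rintro rfl; omega
    exact sbs (j + 1) t y (by omega) (by omega) (by omega) hy2 hj1 hgt hy3
  have hxt : x ≠ t := by rintro rfl; omega
  have hxs : x ≠ s' := by rintro rfl; omega
  have hxj : x ≠ j + 1 := by rintro rfl; omega
  rcases lt_or_gt_of_ne hxt with h | h
  · exact sbs (j + 1) x t (by omega) (by omega) h (by omega) hj1 hx htb
  rcases lt_or_gt_of_ne hxs with h' | h'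
  · exact sbs t x s' (by omega) h h' hs'n htb hx (by omega)
  · exact A2 ((contains_3214 w).2 ⟨b, t, s', x, hb, by omega, hts', h', hxn, hs', htb, hx⟩)

/-! ### The code condition implies avoidance -/

/-- If the positions `j + 1, …, j + c_b` have code zero, they exhaust the positions that are small
for `w_b`: a big one among them would have no small position after it. -/
lemma le_of_small {n : ℕ} (w : Equiv.Perm (Fin n)) {b j s : ℕ} (hbj : b ≤ j)
    (hrun : ∀ m, b ≤ m → m < j → pW n w m < pW n w (m + 1))
    (hzero : ∀ t, j + 1 ≤ t → t ≤ j + code1 n w b → code1 n w t = 0)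
    (hjs : j < s) (hsn : s ≤ n) (hs : pW n w s < pW n w b) : s ≤ j + code1 n w b := by
  have hsub : Finset.Ioc j (j + code1 n w b) ⊆
      (Finset.Ioc j n).filter (fun s => pW n w s < pW n w b) := by
    intro t ht
    rw [Finset.mem_Ioc] at ht
    obtain ⟨y, hy1, hy2, hy3⟩ := exists_small_ge w hbj hrun ht.1 ht.2
    simp only [Finset.mem_filter, Finset.mem_Ioc]
    refine ⟨⟨ht.1, by omega⟩, ?_⟩
    by_contra! hcon
    have hne : y ≠ t := by rintro rfl; omega
    have := code1_pos_of_inv w (s := t) (s' := y) (by omega) hy2 (by omega)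
    have := hzero t ht.1 ht.2
    omega
  have heq := Finset.eq_of_subset_of_card_le hsub (by
    rw [← code1_of_run w hbj hrun, Nat.card_Ioc]; omega)
  have hmem : s ∈ (Finset.Ioc j n).filter (fun s => pW n w s < pW n w b) := by
    simp only [Finset.mem_filter, Finset.mem_Ioc]
    exact ⟨⟨hjs, hsn⟩, hs⟩
  rw [← heq, Finset.mem_Ioc] at hmem
  exact hmem.2

/-- The configuration common to the four patterns contradicts the code condition. The inversion
`p < q` only serves to place `s` and `u` beyond the increasing run starting at `i`. -/
lemma false_of_codeCond {n : ℕ} (w : Equiv.Perm (Fin n))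
    (H : ∀ j, 1 ≤ j → j + 1 ≤ n → pW n w (j + 1) < pW n w j →
        ∀ b, 1 ≤ b → b ≤ j →
          ((∀ m, b ≤ m → m < j → pW n w m < pW n w (m + 1)) ∧
              0 < code1 n w b ∧ code1 n w b < n - j) →
          (∀ b', b < b' → b' ≤ j →
            ¬ ((∀ m, b' ≤ m → m < j → pW n w m < pW n w (m + 1)) ∧
                0 < code1 n w b' ∧ code1 n w b' < n - j)) →
          ∀ t, j + 1 ≤ t → t ≤ j + code1 n w b → code1 n w t = 0)
    {i p q s s' u : ℕ} (hi : 1 ≤ i) (hip : i ≤ p) (hpq : p < q) (hqs : q ≤ s) (hqu : q ≤ u)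
    (hss : s < s') (hs'n : s' ≤ n) (hun : u ≤ n) (hinv : pW n w q < pW n w p)
    (h1 : pW n w s' < pW n w s) (h2 : pW n w s' < pW n w i) (h3 : pW n w i < pW n w u) :
    False := by
  classical
  obtain ⟨j, hij, hjq, hrun, hend⟩ := exists_run_end hip hpq hinv
  have hdesc : pW n w (j + 1) < pW n w j := by
    refine lt_of_le_of_ne hend fun h => ?_
    have := pW_inj w (by omega) (by omega) (by omega) (by omega) h
    omega
  have hi_pos : 0 < code1 n w i := code1_pos_of_inv w (by omega) hs'n h2
  have hi_lt : code1 n w i < n - j := by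
    rw [code1_of_run w hij hrun, ← Nat.card_Ioc]
    refine Finset.card_lt_card ?_
    rw [Finset.filter_ssubset]
    exact ⟨u, by rw [Finset.mem_Ioc]; omega, by omega⟩
  -- `i` is a candidate, hence the maximal candidate `b` is at least `i`
  let Q : ℕ → Prop := fun b => (∀ m, b ≤ m → m < j → pW n w m < pW n w (m + 1)) ∧
    0 < code1 n w b ∧ code1 n w b < n - j
  have hQi : Q i := ⟨hrun, hi_pos, hi_lt⟩
  have hib : i ≤ Nat.findGreatest Q j := Nat.le_findGreatest hij hQi
  have hbj : Nat.findGreatest Q j ≤ j := Nat.findGreatest_le j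
  have hQb : Q (Nat.findGreatest Q j) := Nat.findGreatest_spec hij hQi
  have hmax : ∀ b', Nat.findGreatest Q j < b' → b' ≤ j → ¬ Q b' :=
    fun b' h h' => Nat.findGreatest_is_greatest h h'
  generalize Nat.findGreatest Q j = b at hib hbj hQb hmax
  have hzero := H j (by omega) (by omega) hdesc b (by omega) hbj hQb hmax
  have hfb := le_of_run hrun b hib hbj
  have := le_of_small w (s := s') hbj hQb.1 hzero (by omega) hs'n (by omega)
  have := hzero s (by omega) (by omega)
  have := code1_pos_of_inv w hss hs'n h1
  omega

/-- Proposition 3.4: `w` avoids `3142, 3214, 2431, 3241` iff for every descent `j` of `w`,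
whenever the maximal `b ≤ j` with `w_b < w_{b+1} < ⋯ < w_j` and `0 < c_b < n - j` exists,
one has `c_{j+1} = ⋯ = c_{j+c_b} = 0`. -/
theorem stmt2 (n : ℕ) (w : Equiv.Perm (Fin n)) :
    (AvoidsPattern w ![2, 0, 3, 1] ∧ AvoidsPattern w ![2, 1, 0, 3] ∧
        AvoidsPattern w ![1, 3, 2, 0] ∧ AvoidsPattern w ![2, 1, 3, 0]) ↔
      (∀ j, 1 ≤ j → j + 1 ≤ n → pW n w (j + 1) < pW n w j →
        ∀ b, 1 ≤ b → b ≤ j →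
          ((∀ m, b ≤ m → m < j → pW n w m < pW n w (m + 1)) ∧
              0 < code1 n w b ∧ code1 n w b < n - j) →
          (∀ b', b < b' → b' ≤ j →
            ¬ ((∀ m, b' ≤ m → m < j → pW n w m < pW n w (m + 1)) ∧
                0 < code1 n w b' ∧ code1 n w b' < n - j)) →
          ∀ t, j + 1 ≤ t → t ≤ j + code1 n w b → code1 n w t = 0) := by
  constructor
  · rintro ⟨A1, A2, A3, A4⟩ j _ hjn hdesc b hb hbj ⟨hrun, hpos, hlt⟩ _ t ht ht'
    exact code_eq_zero_of_avoids w A1 A2 A3 A4 hjn hdesc hb hbj hrun hpos hlt ht ht'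
  · intro H
    refine ⟨fun h => ?_, fun h => ?_, fun h => ?_, fun h => ?_⟩
    · obtain ⟨a, b, c, d, h1, hab, hbc, hcd, hd, k1, k2, k3⟩ := (contains_3142 w).1 h
      exact false_of_codeCond w H (p := a) (q := b) (s := c) (s' := d) (u := c) h1 le_rfl hab
        hbc.le hbc.le hcd hd (by omega) (by omega) (by omega) k2 k3
    · obtain ⟨a, b, c, d, h1, hab, hbc, hcd, hd, k1, k2, k3⟩ := (contains_3214 w).1 h
      exact false_of_codeCond w H (p := a) (q := b) (s := b) (s' := c) (u := d) h1 le_rfl hab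
        le_rfl (by omega) hbc (by omega) hd k2 k1 (by omega) k3
    · obtain ⟨a, b, c, d, h1, hab, hbc, hcd, hd, k1, k2, k3⟩ := (contains_2431 w).1 h
      exact false_of_codeCond w H (p := b) (q := c) (s := c) (s' := d) (u := c) h1 hab.le hbc
        le_rfl le_rfl hcd hd (by omega) k3 (by omega) k1 k2
    · obtain ⟨a, b, c, d, h1, hab, hbc, hcd, hd, k1, k2, k3⟩ := (contains_3241 w).1 h
      exact false_of_codeCond w H (p := a) (q := b) (s := c) (s' := d) (u := c) h1 le_rfl hab
        hbc.le hbc.le hcd hd (by omega) k2 (by omega) (by omega) k3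
end

section
/- Let n \geq 3 and let (b_1,...,b_{n-2}) be integers with 0 \leq b_i \leq i for each i, and set w = S(b_1,...,b_{n-2}) \in S_n. Then \alpha_i(w) = n - 1 - i - b_{n-1-i} for all 1 \leq i \leq n-2. Moreover, for every w \in S_n there exists a vector (b_1,...,b_{n-2}) with 0 \leq b_i \leq i such that w is cyclically equivalent to S(b_1,...,b_{n-2}). -/
/-!
Write the word `w^k` as the prefix `1, …, n-k-1` followed by a tail of length `k+1`. If the
previous tail is `E ++ D` with `D` of length `b_k`, the new tail is `D ++ (n-k) :: E`. Up to
rotation, each step therefore inserts the new smallest value somewhere in a cyclic word.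

For the formula for `α_i`, put `k = n-1-i`. Then `i :: D ++ (i+1) :: E` is cyclically
`(i+1) :: E ++ i :: D`, so exactly the `k - b_k` letters of `E` lie between `i+1` and `i`
(`exists_isRotated_base`). Later steps only insert letters smaller than `i`, which do not change
this count (`exists_isRotated_insert`), and `alphaW_eq_countP` reads `α_i` off any rotation
starting at `i+1`.

For the second part, rotate the word so that it starts with `1`. The rule
`E ++ D ↦ D ++ (n-k) :: E` can be undone by cutting at the smallest letter, hence every
arrangement of `n-k, …, n` is a tail (`exists_tailW_eq`), and every word starting with `1` is
literally some `S(b)`.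
-/

open scoped BigOperators

/-- `α_i(w)`: the number of entries greater than `i+1` among `w_r, w_{r+1}, …, w_s`
(indices mod `n`), where `r = w⁻¹(i+1)` and `s = w⁻¹(i)`. -/
def alphaW (n : ℕ) (w : Equiv.Perm (Fin n)) (i : ℕ) : ℕ :=
  ((Finset.range n).filter (fun t =>
    t ≤ (posOf n w i + n - posOf n w (i + 1)) % n ∧
      i + 1 < pW n w ((posOf n w (i + 1) - 1 + t) % n + 1))).card

/-- `w' ~ w`: `w'` is a cyclic rotation of `w`. -/
def CyclicEquiv (n : ℕ) (w w' : Equiv.Perm (Fin n)) : Prop :=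
  ∃ d : ℕ, ∀ p, 1 ≤ p → p ≤ n → pW n w' p = pW n w ((p - 1 + d) % n + 1)
/-- one step of the construction of `S(b_1, …, b_{n-2})`. -/
def Sstep (n i bi : ℕ) (v : List ℕ) : List ℕ :=
  (List.range (n - i - 1)).map (· + 1) ++ v.drop (n - bi)
    ++ (n - i) :: (v.drop (n - i)).take (i - bi)

/-- `w^i` from Definition: `w^0 = (1, 2, …, n)` and
`w^i = (1, …, n-i-1, w^{i-1}_{n-b_i+1}, …, w^{i-1}_n, n-i, w^{i-1}_{n-i+1}, …, w^{i-1}_{n-b_i})`. -/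
def Sbuild (n : ℕ) (b : ℕ → ℕ) : ℕ → List ℕ
  | 0 => (List.range n).map (· + 1)
  | i + 1 => Sstep n (i + 1) (b (i + 1)) (Sbuild n b i)

/-- `S(b_1, …, b_{n-2}) = w^{n-2}`. -/
def Sword (n : ℕ) (b : ℕ → ℕ) : List ℕ := Sbuild n b (n - 2)

/-! ### The tails of the words `w^k` -/

/-- The last `k + 1` letters of `w^k`, those with values `n - k, …, n`; the remaining letters of
`w^k` form the prefix `1, …, n - k - 1`. -/
def tailW (n : ℕ) (b : ℕ → ℕ) : ℕ → List ℕ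
  | 0 => [n]
  | k + 1 => (tailW n b k).drop (k + 1 - b (k + 1)) ++
      (n - (k + 1)) :: (tailW n b k).take (k + 1 - b (k + 1))

lemma length_tailW (n : ℕ) (b : ℕ → ℕ) (k : ℕ) : (tailW n b k).length = k + 1 := by
  induction k with
  | zero => rfl
  | succ k ih => simp [tailW, ih]; omega

lemma tailW_congr (n : ℕ) (b c : ℕ → ℕ) (k : ℕ) (h : ∀ j, j ≤ k → b j = c j) :
    tailW n b k = tailW n c k := by
  induction k with
  | zero => rfl
  | succ k ih =>
    rw [tailW, tailW, ih (fun j hj => h j (by omega)), h (k + 1) le_rfl]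

lemma Sbuild_eq (n : ℕ) (b : ℕ → ℕ) (k : ℕ) (hk : k + 1 ≤ n)
    (hb : ∀ j, 1 ≤ j → j ≤ k → b j ≤ j) :
    Sbuild n b k = (List.range (n - k - 1)).map (· + 1) ++ tailW n b k := by
  induction k with
  | zero =>
    obtain ⟨m, rfl⟩ : ∃ m, n = m + 1 := ⟨n - 1, by omega⟩
    simp [Sbuild, tailW, List.range_succ]
  | succ k ih =>
    have hbk := hb (k + 1) (by omega) le_rfl
    rw [Sbuild, Sstep, ih (by omega) (fun j h1 h2 => hb j h1 (by omega)), tailW]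
    -- Dropping at least `n - k - 1` letters removes the whole prefix.
    have hdrop : ∀ c, c ≤ k + 1 →
        ((List.range (n - k - 1)).map (· + 1) ++ tailW n b k).drop (n - c)
          = (tailW n b k).drop (k + 1 - c) := by
      intro c hc
      rw [List.drop_append]
      simp only [List.length_map, List.length_range]
      rw [List.drop_eq_nil_of_le (by simp; omega)]
      simp only [List.nil_append]
      congr 1; omega
    rw [hdrop _ hbk, hdrop _ le_rfl]
    simp

lemma tailW_isRotated (n : ℕ) (b : ℕ → ℕ) (k : ℕ) :
    tailW n b (k + 1) ~r (n - (k + 1)) :: tailW n b k := by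
  rw [tailW]
  refine List.isRotated_append.trans ?_
  rw [List.cons_append, List.take_append_drop]

lemma tailW_perm (n : ℕ) (b : ℕ → ℕ) (k : ℕ) (hk : k + 1 ≤ n) :
    (tailW n b k).Perm (List.range' (n - k) (k + 1)) := by
  induction k with
  | zero => simp [tailW]
  | succ k ih =>
    refine (tailW_isRotated n b k).perm.trans ?_
    rw [List.range'_succ, show n - (k + 1) + 1 = n - k by omega]
    exact (ih (by omega)).cons _

/-- Every arrangement of `n - k, …, n` is a tail: cut it at its smallest letter as
`D ++ (n - k) :: E`, recover the previous tail `E ++ D`, and take `b_k` to be the length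
of `D`. -/
lemma exists_tailW_eq (n k : ℕ) (hk : k + 1 ≤ n) (T : List ℕ)
    (hT : T.Perm (List.range' (n - k) (k + 1))) :
    ∃ b : ℕ → ℕ, (∀ i, b i ≤ i) ∧ tailW n b k = T := by
  induction k generalizing T with
  | zero =>
    refine ⟨fun _ => 0, fun i => Nat.zero_le i, ?_⟩
    simpa [tailW, eq_comm] using hT
  | succ k ih =>
    rw [List.range'_succ, show n - (k + 1) + 1 = n - k by omega] at hT
    have hmem : n - (k + 1) ∈ T := hT.mem_iff.2 (by simp)
    obtain ⟨D, E, rfl⟩ := List.append_of_mem hmem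
    have hED : (E ++ D).Perm (List.range' (n - k) (k + 1)) := by
      have h := (List.perm_append_comm (l₁ := D) (l₂ := (n - (k + 1)) :: E)).symm.trans hT
      rw [List.cons_append] at h
      exact h.cons_inv
    obtain ⟨b, hb, hbT⟩ := ih (by omega) _ hED
    have hlen : E.length + D.length = k + 1 := by simpa using hED.length_eq
    refine ⟨Function.update b (k + 1) D.length, fun i => ?_, ?_⟩
    · by_cases hi : i = k + 1
      · subst hi; simp; omega
      · simpa [Function.update_of_ne hi] using hb i
    · rw [tailW, tailW_congr n _ b k (fun j hj => Function.update_of_ne (by omega) _ _), hbT,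
        Function.update_self, show k + 1 - D.length = E.length by omega]
      simp

lemma Sword_eq (n : ℕ) (hn : 3 ≤ n) (b : ℕ → ℕ) (hb : ∀ i, 1 ≤ i → i ≤ n - 2 → b i ≤ i) :
    Sword n b = 1 :: tailW n b (n - 2) := by
  rw [Sword, Sbuild_eq n b (n - 2) (by omega) hb, show n - (n - 2) - 1 = 1 by omega]
  simp

/-! ### Cyclic structure of the tails -/

/-- Cyclically, the letters between `i + 1 = n - k` and `i` are the `k - b_k` letters of the
previous tail that were not moved to the front. -/
lemma exists_isRotated_base (n : ℕ) (b : ℕ → ℕ) (i k : ℕ) (hk : 1 ≤ k) (hik : i + 1 + k = n) :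
    ∃ A B : List ℕ, (i :: tailW n b k) ~r ((i + 1) :: (A ++ i :: B)) ∧
      A.countP (fun x => i + 1 < x) = k - b k := by
  obtain ⟨j, rfl⟩ : ∃ j, k = j + 1 := ⟨k - 1, by omega⟩
  refine ⟨(tailW n b j).take (j + 1 - b (j + 1)), (tailW n b j).drop (j + 1 - b (j + 1)), ?_, ?_⟩
  · rw [tailW, show n - (j + 1) = i + 1 by omega, ← List.cons_append]
    exact List.isRotated_append
  · rw [List.countP_eq_length.2]
    · rw [List.length_take, length_tailW]; omega
    · intro x hx
      have := (tailW_perm n b j (by omega)).mem_iff.1 (List.mem_of_mem_take hx)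
      rw [List.mem_range'_1] at this
      simp; omega

/-- Inserting a letter `x ≤ i` anywhere in the cyclic word does not change the number of letters
greater than `i + 1` between `i + 1` and `i`. -/
lemma exists_isRotated_insert (i x : ℕ) (hx : x ≤ i) (T A B : List ℕ)
    (h : T ~r ((i + 1) :: (A ++ i :: B))) :
    ∃ A' B' : List ℕ, (x :: T) ~r ((i + 1) :: (A' ++ i :: B')) ∧
      A'.countP (fun x => i + 1 < x) = A.countP (fun x => i + 1 < x) := by
  obtain ⟨d, hd, rfl⟩ := List.isRotated_iff_mod.1 h.symm
  rw [List.rotate_eq_drop_append_take hd]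
  rcases d with _ | d
  · -- `x` lands just before `i + 1`, that is, at the far end of the cyclic word.
    refine ⟨A, B ++ [x], ?_, rfl⟩
    have := List.isRotated_append (l := [x]) (l' := (i + 1) :: (A ++ i :: B))
    simpa using this
  · simp only [List.drop_succ_cons, List.take_succ_cons]
    have hrot := List.isRotated_append (l := x :: (A ++ i :: B).drop d)
      (l' := (i + 1) :: (A ++ i :: B).take d)
    rw [List.cons_append] at hrot
    rcases Nat.lt_or_ge A.length d with hdA | hdA
    · obtain ⟨e, rfl⟩ : ∃ e, d = A.length + (e + 1) := ⟨d - A.length - 1, by omega⟩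
      refine ⟨A, B.take e ++ x :: B.drop e, ?_, rfl⟩
      refine hrot.trans ?_
      rw [List.take_length_add_append, List.drop_length_add_append]
      simp [List.IsRotated.refl]
    · refine ⟨A.take d ++ x :: A.drop d, B, ?_, ?_⟩
      · refine hrot.trans ?_
        rw [List.take_append_of_le_length hdA, List.drop_append_of_le_length hdA]
        simp [List.IsRotated.refl]
      · conv_rhs => rw [← List.take_append_drop d A]
        simp only [List.countP_append, List.countP_cons]
        simp; omega

lemma exists_isRotated_tailW (n : ℕ) (b : ℕ → ℕ) (i k : ℕ) (hk : 1 ≤ k) (hik : i + 1 + k = n)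
    (m : ℕ) (hkm : k ≤ m) :
    ∃ A B : List ℕ, ((n - (m + 1)) :: tailW n b m) ~r ((i + 1) :: (A ++ i :: B)) ∧
      A.countP (fun x => i + 1 < x) = k - b k := by
  induction m, hkm using Nat.le_induction with
  | base =>
    rw [show n - (k + 1) = i by omega]
    exact exists_isRotated_base n b i k hk hik
  | succ m hm ih =>
    obtain ⟨A, B, h, hc⟩ := ih
    obtain ⟨A', B', h', hc'⟩ := exists_isRotated_insert i (n - (m + 1 + 1)) (by omega) _ A B
      ((tailW_isRotated n b m).trans h)
    exact ⟨A', B', h', hc'.trans hc⟩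

/-! ### Computing `α_i` from a rotated word -/

lemma card_filter_getD (l : List ℕ) (P : ℕ → Prop) [DecidablePred P] :
    ((Finset.range l.length).filter (fun t => P (l.getD t 0))).card
      = l.countP (fun x => P x) := by
  induction l using List.reverseRecOn with
  | nil => simp
  | append_singleton l a ih =>
    have hlast : (l ++ [a]).getD l.length 0 = a := by simp
    rw [List.length_append, List.length_singleton, Finset.range_add_one, Finset.filter_insert,
      List.countP_append, ← ih, hlast]
    have hcongr : (Finset.range l.length).filter (fun t => P ((l ++ [a]).getD t 0))
        = (Finset.range l.length).filter (fun t => P (l.getD t 0)) := by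
      refine Finset.filter_congr fun t ht => ?_
      rw [List.getD_append _ _ _ _ (Finset.mem_range.1 ht)]
    rw [hcongr]
    by_cases h : P a
    · rw [if_pos h, Finset.card_insert_of_notMem (by simp)]; simp [h]
    · simp [h]

lemma posOf_eq (n : ℕ) (w : Equiv.Perm (Fin n)) (q v : ℕ) (h1 : 1 ≤ q) (h2 : q ≤ n)
    (h : pW n w q = v) : posOf n w v = q := by
  rw [pW, dif_pos ⟨h1, h2⟩] at h
  subst h
  have hlt := (w ⟨q - 1, by omega⟩).isLt
  rw [posOf, pW, dif_pos ⟨by omega, by omega⟩]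
  simp
  omega

/-- If the word of `w` is a rotation of `(i + 1) :: A ++ i :: B`, then `α_i(w)` is the number of
letters of `A` greater than `i + 1`. -/
lemma alphaW_eq_countP (n : ℕ) (w : Equiv.Perm (Fin n)) (i : ℕ) (L A B : List ℕ)
    (hL : L.length = n) (hw : ∀ p, 1 ≤ p → p ≤ n → pW n w p = L.getD (p - 1) 0)
    (hrot : L ~r ((i + 1) :: (A ++ i :: B))) :
    alphaW n w i = A.countP (fun x => i + 1 < x) := by
  have hlen : A.length + B.length + 2 = n := by
    have := hrot.perm.length_eq; simp at this; omega
  have hn : 0 < n := by omega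
  obtain ⟨e, he⟩ := hrot
  rw [← List.rotate_mod, hL] at he
  have hd : e % n < n := Nat.mod_lt _ hn
  generalize e % n = d at he hd
  have key : ∀ t, t < n → pW n w ((d + t) % n + 1)
      = ((i + 1) :: (A ++ i :: B)).getD t 0 := by
    intro t ht
    have hm : (d + t) % n < n := Nat.mod_lt _ hn
    rw [hw _ (by omega) (by omega), ← he, List.getD_eq_getElem _ _ (by omega),
      List.getD_eq_getElem _ _ (by simp; omega), List.getElem_rotate]
    simp [hL, Nat.add_comm]
  have hr : posOf n w (i + 1) = d + 1 := by
    refine posOf_eq n w _ _ (by omega) (by omega) ?_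
    have := key 0 hn
    rw [Nat.add_zero d, Nat.mod_eq_of_lt hd] at this
    exact this
  have hs : posOf n w i = (d + (A.length + 1)) % n + 1 := by
    have hm : (d + (A.length + 1)) % n < n := Nat.mod_lt _ hn
    refine posOf_eq n w _ _ (by omega) (by omega) ?_
    rw [key _ (by omega)]
    simp
  have hdist : (posOf n w i + n - posOf n w (i + 1)) % n = A.length + 1 := by
    rw [hr, hs]
    rcases Nat.lt_or_ge (d + (A.length + 1)) n with h | h
    · rw [Nat.mod_eq_of_lt h,
        show d + (A.length + 1) + 1 + n - (d + 1) = A.length + 1 + n by omega,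
        Nat.add_mod_right, Nat.mod_eq_of_lt (by omega)]
    · have hwrap : (d + (A.length + 1)) % n = d + (A.length + 1) - n := by
        rw [Nat.mod_eq_sub_mod h, Nat.mod_eq_of_lt (by omega)]
      rw [hwrap,
        show d + (A.length + 1) - n + 1 + n - (d + 1) = A.length + 1 by omega,
        Nat.mod_eq_of_lt (by omega)]
  rw [alphaW, hdist, hr]
  have hcount := card_filter_getD ((i + 1) :: (A ++ [i])) (fun x => i + 1 < x)
  have hset : (Finset.range n).filter (fun t => t ≤ A.length + 1 ∧
        i + 1 < pW n w ((d + 1 - 1 + t) % n + 1))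
      = (Finset.range ((i + 1) :: (A ++ [i])).length).filter
        (fun t => i + 1 < ((i + 1) :: (A ++ [i])).getD t 0) := by
    have hsplit : (i + 1) :: (A ++ i :: B) = ((i + 1) :: (A ++ [i])) ++ B := by simp
    ext t
    simp only [Finset.mem_filter, Finset.mem_range, Nat.add_sub_cancel]
    have hl : ((i + 1) :: (A ++ [i])).length = A.length + 2 := by simp
    constructor
    · rintro ⟨h1, h2, h3⟩
      rw [key t h1, hsplit, List.getD_append _ _ _ _ (by omega)] at h3
      exact ⟨by omega, h3⟩
    · rintro ⟨h1, h3⟩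
      refine ⟨by omega, by omega, ?_⟩
      rw [key t (by omega), hsplit, List.getD_append _ _ _ _ h1]
      exact h3
  rw [hset, hcount]
  simp

/-! ### Permutations and their words -/

/-- A list arranging `1, …, n` is the word of a permutation. -/
lemma exists_perm_of_list (n : ℕ) (L : List ℕ) (hL : L.Perm (List.range' 1 n)) :
    ∃ w : Equiv.Perm (Fin n), ∀ p, 1 ≤ p → p ≤ n → pW n w p = L.getD (p - 1) 0 := by
  have hlen : L.length = n := by simpa using hL.length_eq
  have hnd : L.Nodup := hL.nodup_iff.2 List.nodup_range'
  have hmem : ∀ p (hp : p < L.length), 1 ≤ L[p] ∧ L[p] < 1 + n := fun p hp =>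
    List.mem_range'_1.1 (hL.mem_iff.1 (List.getElem_mem hp))
  let f : Fin n → Fin n := fun p =>
    ⟨L[(p : ℕ)]'(by omega) - 1, by have := hmem p (by omega); omega⟩
  have hf : Function.Injective f := by
    intro p q hpq
    have h1 := hmem p (by omega)
    have h2 := hmem q (by omega)
    have h3 : L[(p : ℕ)]'(by omega) - 1 = L[(q : ℕ)]'(by omega) - 1 := congrArg Fin.val hpq
    exact Fin.ext ((hnd.getElem_inj_iff).1 (by omega))
  refine ⟨Equiv.ofBijective f (Finite.injective_iff_bijective.1 hf), fun p h1 h2 => ?_⟩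
  have h3 := hmem (p - 1) (by omega)
  rw [pW, dif_pos ⟨h1, h2⟩, List.getD_eq_getElem _ _ (by omega)]
  simp only [Equiv.ofBijective_apply, f]
  omega

/-- The word of `w` as a list. -/
def wordList (n : ℕ) (w : Equiv.Perm (Fin n)) : List ℕ := List.ofFn fun p => (w p : ℕ) + 1

lemma wordList_perm (n : ℕ) (w : Equiv.Perm (Fin n)) :
    (wordList n w).Perm (List.range' 1 n) := by
  rw [List.perm_ext_iff_of_nodup _ List.nodup_range']
  · intro a
    rw [wordList, List.mem_ofFn, List.mem_range'_1]
    constructor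
    · rintro ⟨p, rfl⟩; have := (w p).isLt; omega
    · rintro ⟨h1, h2⟩
      refine ⟨w.symm ⟨a - 1, by omega⟩, ?_⟩
      rw [Equiv.apply_symm_apply]
      simp; omega
  · rw [wordList, List.nodup_ofFn]
    intro p q h
    exact w.injective (Fin.ext (by simpa using h))

theorem stmt18 (n : ℕ) (hn : 3 ≤ n) :
    (∀ b : ℕ → ℕ, (∀ i, 1 ≤ i → i ≤ n - 2 → b i ≤ i) →
      ∀ w : Equiv.Perm (Fin n),
        (∀ p, 1 ≤ p → p ≤ n → pW n w p = (Sword n b).getD (p - 1) 0) →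
        ∀ i, 1 ≤ i → i ≤ n - 2 → alphaW n w i = n - 1 - i - b (n - 1 - i)) ∧
    (∀ w : Equiv.Perm (Fin n), ∃ b : ℕ → ℕ,
      (∀ i, 1 ≤ i → i ≤ n - 2 → b i ≤ i) ∧
      ∃ w' : Equiv.Perm (Fin n),
        (∀ p, 1 ≤ p → p ≤ n → pW n w' p = (Sword n b).getD (p - 1) 0) ∧
        CyclicEquiv n w w') := by
  constructor
  · intro b hb w hw i h1 h2
    obtain ⟨A, B, hrot, hc⟩ := exists_isRotated_tailW n b i (n - 1 - i) (by omega) (by omega)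
      (n - 2) (by omega)
    rw [show n - (n - 2 + 1) = 1 by omega, ← Sword_eq n hn b hb] at hrot
    rw [← hc]
    refine alphaW_eq_countP n w i _ A B ?_ hw hrot
    rw [Sword_eq n hn b hb, List.length_cons, length_tailW]; omega
  · intro w
    have hperm := wordList_perm n w
    have hlen : (wordList n w).length = n := by simp [wordList]
    have h1 : 1 ∈ wordList n w := hperm.mem_iff.2 (by rw [List.mem_range'_1]; omega)
    obtain ⟨C, D, hCD⟩ := List.append_of_mem h1
    have hrot : wordList n w ~r 1 :: (D ++ C) := by
      rw [hCD, ← List.cons_append]; exact List.isRotated_append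
    have hperm' := hrot.perm.symm.trans hperm
    have hT : (D ++ C).Perm (List.range' (n - (n - 2)) (n - 2 + 1)) := by
      have h2 : List.range' 1 n = 1 :: List.range' (n - (n - 2)) (n - 2 + 1) := by
        rw [show n - (n - 2) = 1 + 1 by omega, ← List.range'_succ]
        congr 1; omega
      rw [h2] at hperm'
      exact hperm'.cons_inv
    obtain ⟨b, hb, hbT⟩ := exists_tailW_eq n (n - 2) (by omega) _ hT
    have hS : Sword n b = 1 :: (D ++ C) := by
      rw [Sword_eq n hn b (fun i _ _ => hb i), hbT]
    obtain ⟨w', hw'⟩ := exists_perm_of_list n (Sword n b) (hS ▸ hperm')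
    refine ⟨b, fun i _ _ => hb i, w', hw', ?_⟩
    obtain ⟨d, hd⟩ := hrot
    refine ⟨d, fun p hp1 hp2 => ?_⟩
    have hm : (p - 1 + d) % n < n := Nat.mod_lt _ (by omega)
    rw [hw' p hp1 hp2, hS, ← hd, List.getD_eq_getElem _ _ (by simp; omega),
      List.getElem_rotate, pW, dif_pos ⟨by omega, by omega⟩]
    simp [wordList]
end
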